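/- If a system of half-spaces is globally consistent, the compatible vector field extends over the unit ball and the shifted sphere bounds a disk in the complexified complement. Precisely: let α_1,…,α_n be nonzero linear forms on ℝ^ℓ with ⋂_{i=1}^n ker α_i = {0}, let ε ∈ {+1,−1}^n with ⋂_{i=1}^n H_i^{ε_i} ≠ ∅, and let θ : S^{ℓ−1} → ℝ^ℓ be continuous and compatible with h(ε). Then there exists a continuous map θ̃ : D^ℓ → ℝ^ℓ extending θ such that ε_i·α_i(θ̃(x)) > 0 whenever x ∈ D^ℓ and α_i(x) = 0; consequently the map F(x) = x + √−1·θ̃(x) sends D^ℓ into M(A) and restricts to f_θ on S^{ℓ−1}, so f_θ : S^{ℓ−1} → M(A) is null-homotopic. -/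

import Mathlib

noncomputable section

/-- Real vector space `ℝ^ℓ`. -/
abbrev Vsp (ℓ : ℕ) : Type := EuclideanSpace ℝ (Fin ℓ)

/-- The point `x + √-1 · v` of `ℂ^ℓ` determined by the real vectors `x, v`. -/
def cplx {ℓ : ℕ} (x v : Vsp ℓ) : Fin ℓ → ℂ :=
  fun j => (x j : ℂ) + Complex.I * (v j : ℂ)

/-- The `ℂ`-linear extension of a real linear form, evaluated at `z ∈ ℂ^ℓ`:
`α^ℂ(z) = α(Re z) + √-1 · α(Im z)`. -/
def cLin {ℓ : ℕ} (α : Vsp ℓ →ₗ[ℝ] ℝ) (z : Fin ℓ → ℂ) : ℂ :=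
  (α (WithLp.toLp 2 (fun j => (z j).re)) : ℂ) + Complex.I * (α (WithLp.toLp 2 (fun j => (z j).im)) : ℂ)

/-- The complexified complement `M(A) ⊆ ℂ^ℓ`. -/
def MA {ℓ n : ℕ} (α : Fin n → (Vsp ℓ →ₗ[ℝ] ℝ)) : Set (Fin ℓ → ℂ) :=
  {z | ∀ i, cLin (α i) z ≠ 0}

/-!
Extend `θ` over the ball by coning it off at a point `p` common to all the half-spaces: on the ray
through a unit vector `u`, interpolate linearly from `p` at the origin to `θ u` at `u`. If `α i`
vanishes at a point of this ray other than the origin, it vanishes at `u`, so `p` and `θ u` both lie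
in the `i`-th half-space, and by convexity so does the whole segment between them. Hence
`x + √-1 · θ̃(x)` avoids every complexified hyperplane, and the resulting map factors `f_θ` through
the contractible ball.
-/

open Metric NormedSpace

section RadialExtension

variable {E F : Type*} [NormedAddCommGroup E] [NormedSpace ℝ E]

/-- The cone with apex value `p` over a map `θ` on the unit sphere: on each ray it interpolates
linearly between `p` at the origin and the value of `θ` at the unit vector. Only the values of `θ`
on the sphere matter: `normalize 0 = 0`, but `θ 0` enters with weight `‖0‖ = 0`. -/
def radialExtension [AddCommGroup F] [Module ℝ F] (p : F) (θ : E → F) (x : E) : F :=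
  AffineMap.lineMap p (θ (normalize x)) ‖x‖

theorem radialExtension_zero [AddCommGroup F] [Module ℝ F] (p : F) (θ : E → F) :
    radialExtension p θ 0 = p := by
  simp [radialExtension]

theorem radialExtension_of_norm_eq_one [AddCommGroup F] [Module ℝ F] (p : F) (θ : E → F) {x : E}
    (hx : ‖x‖ = 1) : radialExtension p θ x = θ x := by
  simp [radialExtension, hx, normalize_eq_self_of_norm_eq_one hx]

theorem normalize_mem_sphere {x : E} (hx : x ≠ 0) : normalize x ∈ sphere (0 : E) 1 :=
  mem_sphere_zero_iff_norm.mpr (norm_normalize_eq_one_iff.mpr hx)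

theorem radialExtension_mem_of_convex [AddCommGroup F] [Module ℝ F] {p : F} {θ : E → F} {x : E}
    {K : Set F} (hK : Convex ℝ K) (hp : p ∈ K) (hθ : x ≠ 0 → θ (normalize x) ∈ K) (hx : ‖x‖ ≤ 1) :
    radialExtension p θ x ∈ K := by
  rcases eq_or_ne x 0 with rfl | hx₀
  · rwa [radialExtension_zero]
  · exact hK.lineMap_mem hp (hθ hx₀) ⟨norm_nonneg x, hx⟩

theorem continuousOn_normalize : ContinuousOn (normalize : E → E) {0}ᶜ :=
  (continuous_norm.continuousOn.inv₀ fun _ hx => norm_ne_zero_iff.mpr hx).smul continuousOn_id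

variable [SeminormedAddCommGroup F] [NormedSpace ℝ F]

theorem continuousOn_radialExtension (p : F) {θ : E → F} (hθ : ContinuousOn θ (sphere 0 1)) :
    ContinuousOn (radialExtension p θ) {0}ᶜ :=
  continuousOn_const.lineMap
    (hθ.comp continuousOn_normalize fun _ hx => normalize_mem_sphere hx)
    continuous_norm.continuousOn

theorem continuousAt_radialExtension_zero (p : F) {θ : E → F}
    (hb : Bornology.IsBounded (θ '' sphere 0 1)) : ContinuousAt (radialExtension p θ) 0 := by
  obtain ⟨C, hC⟩ := hb.subset_closedBall p
  have dist_le (x : E) : dist (radialExtension p θ x) p ≤ ‖x‖ * C := by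
    rcases eq_or_ne x 0 with rfl | hx
    · simp [radialExtension_zero]
    · have hθx : dist (θ (normalize x)) p ≤ C :=
        hC (Set.mem_image_of_mem θ (normalize_mem_sphere hx))
      rw [radialExtension, dist_lineMap_left, norm_norm, dist_comm]
      gcongr
  have bound_tendsto : Filter.Tendsto (fun x : E => ‖x‖ * C) (nhds 0) (nhds 0) := by
    simpa using (continuous_norm.mul_const C).tendsto (0 : E)
  rw [ContinuousAt, radialExtension_zero, tendsto_iff_dist_tendsto_zero]
  exact squeeze_zero (fun _ => dist_nonneg) dist_le bound_tendsto

theorem continuous_radialExtension (p : F) {θ : E → F} (hθ : ContinuousOn θ (sphere 0 1))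
    (hb : Bornology.IsBounded (θ '' sphere 0 1)) : Continuous (radialExtension p θ) := by
  rw [continuous_iff_continuousAt]
  intro x
  rcases eq_or_ne x 0 with rfl | hx
  · exact continuousAt_radialExtension_zero p hb
  · exact (continuousOn_radialExtension p hθ).continuousAt (isOpen_compl_singleton.mem_nhds hx)

end RadialExtension

theorem continuousOn_extend_val_iff {X Y : Type*} [TopologicalSpace X] [TopologicalSpace Y]
    {s : Set X} {f : s → Y} {g : X → Y} :
    ContinuousOn (Function.extend Subtype.val f g) s ↔ Continuous f := by
  rw [continuousOn_iff_continuous_domRestrict]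
  congr! 1
  exact funext (Subtype.val_injective.extend_apply f g)

section Compatible

variable {ι E : Type*}

/-- Compatibility on `s` of a vector field `θ` with the half-spaces `ε i * α i > 0`: at the points
of `s` on the `i`-th hyperplane, `θ` points into the `i`-th half-space. The weights `ε i` are
arbitrary real numbers, of which only the signs matter. -/
def IsCompatibleOn [AddCommGroup E] [Module ℝ E] (α : ι → E →ₗ[ℝ] ℝ) (ε : ι → ℝ) (s : Set E)
    (θ : E → E) : Prop :=
  ∀ x ∈ s, ∀ i, α i x = 0 → 0 < ε i * α i (θ x)

theorem IsCompatibleOn.radialExtension [NormedAddCommGroup E] [NormedSpace ℝ E]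
    {α : ι → E →ₗ[ℝ] ℝ} {ε : ι → ℝ} {θ : E → E} {p : E} (hp : ∀ i, 0 < ε i * α i p)
    (hθ : IsCompatibleOn α ε (sphere 0 1) θ) :
    IsCompatibleOn α ε (closedBall 0 1) (radialExtension p θ) := by
  intro x hx i hxi
  have convex_halfSpace : Convex ℝ {v | 0 < ε i * α i v} :=
    convex_halfSpace_gt (ε i • α i).isLinear 0
  have normalize_mem_ker : α i (normalize x) = 0 := by simp [NormedSpace.normalize, hxi]
  exact radialExtension_mem_of_convex convex_halfSpace (hp i)
    (fun hx₀ => hθ _ (normalize_mem_sphere hx₀) i normalize_mem_ker)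
    (mem_closedBall_zero_iff.mp hx)

theorem exists_continuous_extension_isCompatibleOn_closedBall [NormedAddCommGroup E]
    [NormedSpace ℝ E] [ProperSpace E] {α : ι → E →ₗ[ℝ] ℝ} {ε : ι → ℝ}
    (hcons : (⋂ i, {x : E | 0 < ε i * α i x}).Nonempty)
    {θ : sphere (0 : E) 1 → E} (hθ : Continuous θ)
    (hcomp : ∀ x : sphere (0 : E) 1, ∀ i, α i (x : E) = 0 → 0 < ε i * α i (θ x)) :
    ∃ T : E → E, Continuous T ∧ (∀ x : sphere (0 : E) 1, T x = θ x) ∧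
      IsCompatibleOn α ε (closedBall 0 1) T := by
  obtain ⟨p, hp⟩ := hcons
  let Θ : E → E := Function.extend Subtype.val θ 0
  have Θ_eq (x : sphere (0 : E) 1) : Θ x = θ x := Subtype.val_injective.extend_apply θ 0 x
  have Θ_cont : ContinuousOn Θ (sphere 0 1) := continuousOn_extend_val_iff.mpr hθ
  have Θ_bounded : Bornology.IsBounded (Θ '' sphere 0 1) :=
    ((isCompact_sphere 0 1).image_of_continuousOn Θ_cont).isBounded
  have Θ_compat : IsCompatibleOn α ε (sphere 0 1) Θ :=
    fun x hx i hxi => Θ_eq ⟨x, hx⟩ ▸ hcomp ⟨x, hx⟩ i hxi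
  exact ⟨radialExtension p Θ, continuous_radialExtension p Θ_cont Θ_bounded,
    fun x => (radialExtension_of_norm_eq_one p Θ (mem_sphere_zero_iff_norm.mp x.2)).trans (Θ_eq x),
    Θ_compat.radialExtension (Set.mem_iInter.mp hp)⟩

end Compatible

section Complexification

variable {ℓ n : ℕ}

theorem cLin_cplx (a : Vsp ℓ →ₗ[ℝ] ℝ) (x v : Vsp ℓ) :
    cLin a (cplx x v) = (a x : ℂ) + Complex.I * (a v : ℂ) := by
  simp [cLin, cplx]

theorem cplx_mem_MA_iff {α : Fin n → (Vsp ℓ →ₗ[ℝ] ℝ)} {x v : Vsp ℓ} :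
    cplx x v ∈ MA α ↔ ∀ i, α i x = 0 → α i v ≠ 0 := by
  simp [MA, cLin_cplx, Complex.ext_iff]

theorem IsCompatibleOn.cplx_mem_MA {α : Fin n → (Vsp ℓ →ₗ[ℝ] ℝ)} {ε : Fin n → ℝ} {s : Set (Vsp ℓ)}
    {θ : Vsp ℓ → Vsp ℓ} (hθ : IsCompatibleOn α ε s θ) {x : Vsp ℓ} (hx : x ∈ s) :
    cplx x (θ x) ∈ MA α :=
  cplx_mem_MA_iff.mpr fun i hxi => right_ne_zero_of_mul (hθ x hx i hxi).ne'

theorem continuous_cplx : Continuous fun q : Vsp ℓ × Vsp ℓ => cplx q.1 q.2 := by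
  unfold cplx
  fun_prop

end Complexification

theorem nullhomotopic_of_extends_to_closedBall {E Y : Type*} [SeminormedAddCommGroup E]
    [NormedSpace ℝ E] [TopologicalSpace Y] {c : E} {r : ℝ} (hr : 0 ≤ r) {f : C(sphere c r, Y)}
    (F : C(closedBall c r, Y))
    (hF : ∀ x : sphere c r, F ⟨x, sphere_subset_closedBall x.2⟩ = f x) :
    f.Nullhomotopic := by
  have : ContractibleSpace (closedBall c r) :=
    (convex_closedBall c r).contractibleSpace (nonempty_closedBall.mpr hr)
  let incl : C(sphere c r, closedBall c r) := .inclusion sphere_subset_closedBall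
  have f_eq : f = F.comp incl := ContinuousMap.ext fun x => (hF x).symm
  rw [f_eq]
  exact ((id_nullhomotopic _).comp_left incl).comp_right F

theorem consistent_implies_nullhomotopic_general {ℓ n : ℕ} {α : Fin n → (Vsp ℓ →ₗ[ℝ] ℝ)}
    {ε : Fin n → ℝ} (hcons : (⋂ i, {x : Vsp ℓ | 0 < ε i * α i x}).Nonempty)
    {θ : sphere (0 : Vsp ℓ) 1 → Vsp ℓ} (hθ : Continuous θ)
    (hcomp : ∀ x : sphere (0 : Vsp ℓ) 1, ∀ i : Fin n,
      α i (x : Vsp ℓ) = 0 → 0 < ε i * α i (θ x)) :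
    (∃ θext : closedBall (0 : Vsp ℓ) 1 → Vsp ℓ,
      Continuous θext ∧
      (∀ x : sphere (0 : Vsp ℓ) 1, θext ⟨(x : Vsp ℓ), sphere_subset_closedBall x.2⟩ = θ x) ∧
      (∀ x : closedBall (0 : Vsp ℓ) 1, ∀ i : Fin n,
        α i (x : Vsp ℓ) = 0 → 0 < ε i * α i (θext x)) ∧
      (∀ x : closedBall (0 : Vsp ℓ) 1, cplx (x : Vsp ℓ) (θext x) ∈ MA α)) ∧
    (∀ f : C(sphere (0 : Vsp ℓ) 1, MA α),
      (∀ x, (f x : Fin ℓ → ℂ) = cplx (x : Vsp ℓ) (θ x)) →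
      ∃ c : MA α, f.Homotopic (ContinuousMap.const _ c)) := by
  obtain ⟨T, T_cont, T_eq, T_compat⟩ :=
    exists_continuous_extension_isCompatibleOn_closedBall hcons hθ hcomp
  refine ⟨⟨fun x => T x, T_cont.comp continuous_subtype_val, T_eq, fun x => T_compat x x.2,
    fun x => T_compat.cplx_mem_MA x.2⟩, fun f hf => ?_⟩
  have shift_cont : Continuous fun x => cplx x (T x) :=
    continuous_cplx.comp (continuous_id.prodMk T_cont)
  let F : C(closedBall (0 : Vsp ℓ) 1, MA α) :=
    ⟨fun x => ⟨cplx x (T x), T_compat.cplx_mem_MA x.2⟩,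
      (shift_cont.comp continuous_subtype_val).subtype_mk _⟩
  have F_eq (x : sphere (0 : Vsp ℓ) 1) : F ⟨x, sphere_subset_closedBall x.2⟩ = f x :=
    Subtype.ext ((congrArg (cplx x) (T_eq x)).trans (hf x).symm)
  exact nullhomotopic_of_extends_to_closedBall zero_le_one F F_eq

/-- If the system of half-spaces is globally consistent, a compatible vector field
extends over the unit ball, and the shifted sphere bounds a disk in the complexified
complement; in particular `f_θ` is null-homotopic in `M(A)`. -/
theorem consistent_implies_nullhomotopic (ℓ n : ℕ)
    (α : Fin n → (Vsp ℓ →ₗ[ℝ] ℝ))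
    (hα : ∀ i, α i ≠ 0)
    (hess : (⋂ i, (LinearMap.ker (α i) : Set (Vsp ℓ))) = {0})
    (ε : Fin n → ℝ) (hε : ∀ i, ε i = 1 ∨ ε i = -1)
    (hcons : (⋂ i, {x : Vsp ℓ | 0 < ε i * α i x}).Nonempty)
    (θ : Metric.sphere (0 : Vsp ℓ) 1 → Vsp ℓ) (hθ : Continuous θ)
    (hcomp : ∀ x : Metric.sphere (0 : Vsp ℓ) 1, ∀ i : Fin n,
      α i (x : Vsp ℓ) = 0 → 0 < ε i * α i (θ x)) :
    (∃ θext : Metric.closedBall (0 : Vsp ℓ) 1 → Vsp ℓ,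
      Continuous θext ∧
      (∀ x : Metric.sphere (0 : Vsp ℓ) 1,
        θext ⟨(x : Vsp ℓ), Metric.sphere_subset_closedBall x.2⟩ = θ x) ∧
      (∀ x : Metric.closedBall (0 : Vsp ℓ) 1, ∀ i : Fin n,
        α i (x : Vsp ℓ) = 0 → 0 < ε i * α i (θext x)) ∧
      (∀ x : Metric.closedBall (0 : Vsp ℓ) 1, cplx (x : Vsp ℓ) (θext x) ∈ MA α)) ∧
    (∀ f : C(Metric.sphere (0 : Vsp ℓ) 1, MA α),
      (∀ x, (f x : Fin ℓ → ℂ) = cplx (x : Vsp ℓ) (θ x)) →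
      ∃ c : MA α, f.Homotopic (ContinuousMap.const _ c)) := by
  exact consistent_implies_nullhomotopic_general hcons hθ hcomp
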